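/- Suppose G is a primitive group of permutations of an infinite set Ω and α ∈ Ω. Then the cardinalities of the orbits of the point stabilizer G_α on Ω are bounded above by a finite cardinal if and only if G_α is a finite group. -/

import Mathlib

/-- A group `G` acts primitively on `Ω` if it acts transitively and the only
`G`-invariant equivalence relations on `Ω` are the universal and the trivial ones. -/
def IsPrimitive (G Ω : Type*) [Group G] [MulAction G Ω] : Prop :=
  MulAction.IsPretransitive G Ω ∧
    ∀ r : Ω → Ω → Prop, Equivalence r →
      (∀ (g : G) (x y : Ω), r x y → r (g • x) (g • y)) →
      (∀ x y : Ω, r x y) ∨ (∀ x y : Ω, r x y → x = y)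

/-- The orbit of `β` under the pointwise stabilizer of `F`. -/
def fixOrb (G : Type*) {Ω : Type*} [Group G] [MulAction G Ω] (F : Set Ω) (β : Ω) : Set Ω :=
  {y | ∃ g : G, (∀ f ∈ F, g • f = f) ∧ g • β = y}

theorem fixOrb_mono {G Ω : Type*} [Group G] [MulAction G Ω] {F F' : Set Ω} (h : F ⊆ F') (β : Ω) :
    fixOrb G F' β ⊆ fixOrb G F β := by
  rintro y ⟨g, hg, rfl⟩
  exact ⟨g, fun f hf => hg f (h hf), rfl⟩

theorem fixOrb_smul {G Ω : Type*} [Group G] [MulAction G Ω] (F : Set Ω) (g : G) (β : Ω) :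
    fixOrb G ((fun x => g • x) '' F) β = (fun x => g • x) '' fixOrb G F (g⁻¹ • β) := by
  ext y
  constructor
  · rintro ⟨k, hk, rfl⟩
    refine ⟨g⁻¹ • k • β, ⟨g⁻¹ * k * g, ?_, ?_⟩, ?_⟩
    · intro f hf
      have := hk (g • f) ⟨f, hf, rfl⟩
      simp [mul_smul, this]
    · simp [mul_smul]
    · simp
  · rintro ⟨_, ⟨k, hk, rfl⟩, rfl⟩
    refine ⟨g * k * g⁻¹, ?_, ?_⟩
    · rintro _ ⟨f, hf, rfl⟩
      simp [mul_smul, hk f hf]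
    · simp [mul_smul]

theorem fixOrb_self {G Ω : Type*} [Group G] [MulAction G Ω] (F : Set Ω) (β : Ω) :
    β ∈ fixOrb G F β := ⟨1, by simp, by simp⟩

theorem fixOrb_smul_mem_iff {G Ω : Type*} [Group G] [MulAction G Ω] (F : Set Ω) (β : Ω) (t : G)
    (ht : ∀ f ∈ F, t • f = f) (b : Ω) : t • b ∈ fixOrb G F β ↔ b ∈ fixOrb G F β := by
  constructor
  · rintro ⟨k, hk, h⟩
    refine ⟨t⁻¹ * k, fun f hf => ?_, ?_⟩
    · rw [mul_smul, hk f hf, inv_smul_eq_iff, ht f hf]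
    · rw [mul_smul, h, inv_smul_smul]
  · rintro ⟨k, hk, rfl⟩
    exact ⟨t * k, fun f hf => by rw [mul_smul, hk f hf, ht f hf], by rw [mul_smul]⟩

/-- The union of the conjugates of the pointwise stabilizer of `F`. -/
def conjFix (G : Type*) {Ω : Type*} [Group G] [MulAction G Ω] (F : Set Ω) : Set G :=
  {t | ∃ g : G, ∀ f ∈ F, t • g • f = g • f}

theorem conjFix_conj {G Ω : Type*} [Group G] [MulAction G Ω] (F : Set Ω) (g p : G)
    (hp : p ∈ Subgroup.closure (conjFix G F)) :
    g * p * g⁻¹ ∈ Subgroup.closure (conjFix G F) := by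
  induction hp using Subgroup.closure_induction with
  | mem t ht =>
    obtain ⟨k, hk⟩ := ht
    refine Subgroup.subset_closure ⟨g * k, fun f hf => ?_⟩
    simp [mul_smul, hk f hf]
  | one => simp
  | mul x y _ _ hx hy =>
    have := mul_mem hx hy
    simpa [mul_assoc] using this
  | inv x _ hx =>
    have := inv_mem hx
    simpa [mul_assoc] using this

theorem closure_support {G Ω : Type*} [Group G] [MulAction G Ω] (F : Set Ω) (p : G)
    (hp : p ∈ Subgroup.closure (conjFix G F)) :
    ∃ E : Set G, E.Finite ∧ ∀ B : Set Ω,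
      (∀ g ∈ E, ∀ t : G, (∀ f ∈ F, t • g • f = g • f) → ∀ b, t • b ∈ B ↔ b ∈ B) →
      ∀ b, p • b ∈ B ↔ b ∈ B := by
  induction hp using Subgroup.closure_induction with
  | mem t ht =>
    obtain ⟨k, hk⟩ := ht
    exact ⟨{k}, Set.finite_singleton k, fun B hB => hB k rfl t hk⟩
  | one => exact ⟨∅, Set.finite_empty, by simp⟩
  | mul x y _ _ hx hy =>
    obtain ⟨E, hE, h⟩ := hx
    obtain ⟨E', hE', h'⟩ := hy
    refine ⟨E ∪ E', hE.union hE', fun B hB b => ?_⟩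
    rw [mul_smul, h B (fun g hg => hB g (Or.inl hg)), h' B (fun g hg => hB g (Or.inr hg))]
  | inv x _ hx =>
    obtain ⟨E, hE, h⟩ := hx
    refine ⟨E, hE, fun B hB b => ?_⟩
    rw [← h B hB, smul_inv_smul]

theorem exists_trivial_fix {G Ω : Type*} [Group G] [MulAction G Ω]
    [FaithfulSMul G Ω] [Infinite Ω] (hprim : IsPrimitive G Ω) (α : Ω) (n : ℕ)
    (hn : ∀ β γ : Ω, (fixOrb G {β} γ).Finite ∧ (fixOrb G {β} γ).ncard ≤ n) :
    ∃ F : Set Ω, F.Finite ∧ ∀ g : G, (∀ f ∈ F, g • f = f) → g = 1 := by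
  classical
  have fin : ∀ F : Set Ω, F.Nonempty → ∀ β, (fixOrb G F β).Finite := by
    rintro F ⟨f, hf⟩ β
    exact (hn f β).1.subset (fixOrb_mono (by simpa using hf) β)
  have hex : ∃ m : ℕ, ∃ F : Set Ω, F.Finite ∧ F.Nonempty ∧ ∀ β, (fixOrb G F β).ncard ≤ m :=
    ⟨n, {α}, Set.finite_singleton α, Set.singleton_nonempty α, fun β => (hn α β).2⟩
  obtain ⟨F, hF, hFne, hFm⟩ := Nat.find_spec hex
  have hmin := fun k => @Nat.find_min _ _ hex k
  have hmn : Nat.find hex ≤ n := Nat.find_min' hex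
    ⟨{α}, Set.finite_singleton α, Set.singleton_nonempty α, fun β => (hn α β).2⟩
  generalize Nat.find hex = m at hFm hmin hmn
  have hbig : ∀ F' : Set Ω, F'.Finite → F'.Nonempty → ∃ β, m ≤ (fixOrb G F' β).ncard := by
    intro F' h1 h2
    by_contra! hcon
    have h0 := hcon α
    exact hmin (m - 1) (by omega) ⟨F', h1, h2, fun β => by have := hcon β; omega⟩
  refine ⟨F, hF, ?_⟩
  have hsymm : ∀ {x y : Ω}, (∃ p ∈ Subgroup.closure (conjFix G F), p • x = y) →
      ∃ p ∈ Subgroup.closure (conjFix G F), p • y = x := by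
    rintro x _ ⟨p, hp, rfl⟩
    exact ⟨p⁻¹, inv_mem hp, inv_smul_smul _ _⟩
  have htrans : ∀ {x y z : Ω}, (∃ p ∈ Subgroup.closure (conjFix G F), p • x = y) →
      (∃ p ∈ Subgroup.closure (conjFix G F), p • y = z) →
      ∃ p ∈ Subgroup.closure (conjFix G F), p • x = z := by
    rintro x _ _ ⟨p, hp, rfl⟩ ⟨q, hq, rfl⟩
    exact ⟨q * p, mul_mem hq hp, mul_smul _ _ _⟩
  have hinv : ∀ (g : G) (x y : Ω), (∃ p ∈ Subgroup.closure (conjFix G F), p • x = y) →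
      ∃ p ∈ Subgroup.closure (conjFix G F), p • g • x = g • y := by
    rintro g x _ ⟨p, hp, rfl⟩
    exact ⟨g * p * g⁻¹, conjFix_conj F g p hp, by simp [mul_smul]⟩
  rcases hprim.2 (fun x y => ∃ p ∈ Subgroup.closure (conjFix G F), p • x = y)
    ⟨fun x => ⟨1, one_mem _, one_smul _ _⟩, hsymm, htrans⟩ hinv with huniv | htriv
  · exfalso
    choose p hp hpe using fun y => huniv α y
    choose E hE hEB using fun y => closure_support F (p y) (hp y)
    obtain ⟨S, hS⟩ := Infinite.exists_subset_card_eq Ω (n * m + 1)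
    let E' : Set G := insert 1 (⋃ y ∈ S, E y)
    have hE' : E'.Finite := (S.finite_toSet.biUnion fun y _ => hE y).insert 1
    let F' : Set Ω := ⋃ g ∈ E', (fun x => g • x) '' F
    have hF' : F'.Finite := hE'.biUnion fun g _ => hF.image _
    have hsub : ∀ g ∈ E', (fun x => g • x) '' F ⊆ F' := fun g hg =>
      Set.subset_biUnion_of_mem (u := fun g : G => (fun x => g • x) '' F) hg
    have hF'ne : F'.Nonempty := (hFne.image _).mono (hsub 1 (Set.mem_insert _ _))
    obtain ⟨β, hβ⟩ := hbig F' hF' hF'ne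
    have hconj : ∀ g : G, ∀ γ, (fixOrb G ((fun x => g • x) '' F) γ).ncard ≤ m := by
      intro g γ
      rw [fixOrb_smul, Set.ncard_image_of_injective _ (MulAction.injective g)]
      exact hFm _
    have heq : ∀ g ∈ E', fixOrb G F' β = fixOrb G ((fun x => g • x) '' F) β := fun g hg =>
      Set.eq_of_subset_of_ncard_le (fixOrb_mono (hsub g hg) β) ((hconj g β).trans hβ)
        (fin _ (hFne.image _) β)
    have hBm : (fixOrb G F' β).ncard ≤ m := by
      rw [heq 1 (Set.mem_insert _ _)]
      exact hconj 1 β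
    have hstab : ∀ y ∈ S, p y • β ∈ fixOrb G F' β := by
      intro y hy
      refine (hEB y (fixOrb G F' β) ?_ β).2 (fixOrb_self _ _)
      intro g hg t ht b
      have hgE : g ∈ E' := Set.mem_insert_of_mem _ (Set.mem_biUnion hy hg)
      rw [heq g hgE]
      refine fixOrb_smul_mem_iff _ _ _ ?_ b
      rintro _ ⟨f, hf, rfl⟩
      exact ht f hf
    have hBfin := fin F' hF'ne β
    have hcard := Finset.card_le_mul_card_image_of_maps_to (s := S) (t := hBfin.toFinset)
      (f := fun y => p y • β) (fun y hy => by simpa using hstab y hy) n ?_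
    · rw [← Set.ncard_eq_toFinset_card _ hBfin, hS] at hcard
      have := Nat.mul_le_mul_left n hBm
      omega
    · intro b _
      rcases (S.filter (fun y => p y • β = b)).eq_empty_or_nonempty with h | ⟨z, hz⟩
      · simp [h]
      · rw [Finset.mem_filter] at hz
        rw [← Set.ncard_coe_finset]
        refine le_trans (Set.ncard_le_ncard (t := (fun x => p z • x) '' fixOrb G {β} α) ?_
          ((hn β α).1.image _)) ?_
        · intro y hy
          simp only [Finset.coe_filter, Set.mem_ofPred_eq] at hy
          refine ⟨(p z)⁻¹ • y, ⟨(p z)⁻¹ * p y, ?_, ?_⟩, by simp⟩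
          · rintro f rfl
            rw [mul_smul, hy.2, ← hz.2, inv_smul_smul]
          · rw [mul_smul, hpe]
        · rw [Set.ncard_image_of_injective _ (MulAction.injective _)]
          exact (hn β α).2
  · intro g hg
    refine FaithfulSMul.eq_of_smul_eq_smul (α := Ω) fun x => ?_
    rw [one_smul]
    exact (htriv x (g • x) ⟨g, Subgroup.subset_closure ⟨1, by simpa using hg⟩, rfl⟩).symm

theorem fixOrb_singleton {G Ω : Type*} [Group G] [MulAction G Ω] (α β : Ω) :
    fixOrb G {α} β = MulAction.orbit (MulAction.stabilizer G α) β := by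
  ext y
  constructor
  · rintro ⟨g, hg, rfl⟩
    exact ⟨⟨g, hg α rfl⟩, rfl⟩
  · rintro ⟨⟨g, hg⟩, rfl⟩
    exact ⟨g, by rintro f rfl; exact hg, rfl⟩

/-- If `G` is a primitive group of permutations of an infinite set `Ω` and `α ∈ Ω`,
then the cardinalities of the orbits of the point stabilizer `G_α` on `Ω` are
bounded above by a finite cardinal if and only if `G_α` is finite. -/
theorem bounded_suborbits_iff_stabilizer_finite {G Ω : Type*} [Group G] [MulAction G Ω]
    [FaithfulSMul G Ω] [Infinite Ω]
    (hprim : IsPrimitive G Ω) (α : Ω) :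
    (∃ n : ℕ, ∀ β : Ω,
      Cardinal.mk (MulAction.orbit (MulAction.stabilizer G α) β) ≤ (n : Cardinal)) ↔
    Finite (MulAction.stabilizer G α) := by
  constructor
  · rintro ⟨n, hn⟩
    have hα : ∀ γ : Ω, (fixOrb G {α} γ).Finite ∧ (fixOrb G {α} γ).ncard ≤ n := by
      intro γ
      have h := hn γ
      rw [← fixOrb_singleton] at h
      have hf : (fixOrb G {α} γ).Finite :=
        Cardinal.lt_aleph0_iff_set_finite.1 (h.trans_lt (Cardinal.natCast_lt_aleph0))
      refine ⟨hf, ?_⟩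
      rw [← Set.cast_ncard hf] at h
      exact_mod_cast h
    have hall : ∀ β γ : Ω, (fixOrb G {β} γ).Finite ∧ (fixOrb G {β} γ).ncard ≤ n := by
      intro β γ
      obtain ⟨g, rfl⟩ := hprim.1.exists_smul_eq α β
      have := fixOrb_smul {α} g γ
      rw [Set.image_singleton] at this
      rw [this, Set.ncard_image_of_injective _ (MulAction.injective g)]
      exact ⟨(hα _).1.image _, (hα _).2⟩
    obtain ⟨F, hF, hF1⟩ := exists_trivial_fix hprim α n hall
    have := hF.to_subtype
    have : ∀ f : F, Finite (fixOrb G {α} (f : Ω)) := fun f => (hα f).1.to_subtype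
    refine Finite.of_injective (β := ∀ f : F, fixOrb G {α} (f : Ω))
      (fun g f => ⟨(g : G) • (f : Ω), (g : G), by rintro x rfl; exact g.2, rfl⟩) ?_
    intro g h hgh
    have h1 : (h : G)⁻¹ * (g : G) = 1 := by
      refine hF1 _ fun f hf => ?_
      have h2 := congrArg Subtype.val (congrFun hgh ⟨f, hf⟩)
      change (g : G) • f = (h : G) • f at h2
      rw [mul_smul, h2, inv_smul_smul]
    exact Subtype.ext (inv_mul_eq_one.1 h1).symm
  · intro hfin
    refine ⟨Nat.card (MulAction.stabilizer G α), fun β => ?_⟩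
    have hf : (MulAction.orbit (MulAction.stabilizer G α) β).Finite := Set.finite_range _
    rw [← Set.cast_ncard hf]
    have : (MulAction.orbit (MulAction.stabilizer G α) β).ncard
        ≤ Nat.card (MulAction.stabilizer G α) := by
      rw [← Nat.card_coe_set_eq]
      exact Finite.card_range_le _
    exact_mod_cast this
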